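/- Let n ≥ 2, r > 0, let U be a nonempty relatively open subset of the sphere rS^{n-1} = {x ∈ ℝⁿ : |x| = r}, and let v_1, …, v_m be unit vectors with rS^{n-1} ⊆ ∪_{i=1}^m σ_{v_i}(U). Then there exist δ_1, …, δ_m > 0 such that for all unit vectors u_1, …, u_m with |u_i − v_i| < δ_i for each i, one still has rS^{n-1} ⊆ ∪_{i=1}^m σ_{u_i}(U). -/

import Mathlib

open MeasureTheory Filter Metric

/-- Orthogonal projection of `ℝⁿ` onto the hyperplane `u^⊥` through the origin. -/
noncomputable def steinerProj {n : ℕ} (u : EuclideanSpace ℝ (Fin n)) :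
    EuclideanSpace ℝ (Fin n) → EuclideanSpace ℝ (Fin n) :=
  fun z => ((Submodule.orthogonalProjection (Submodule.span ℝ {u})ᗮ) z : EuclideanSpace ℝ (Fin n))

/-- `ℓ_{E,u}(x')` : the one-dimensional Lebesgue measure of `{t : x' + t u ∈ E}`. -/
noncomputable def steinerLen {n : ℕ} (u : EuclideanSpace ℝ (Fin n))
    (E : Set (EuclideanSpace ℝ (Fin n))) (x' : EuclideanSpace ℝ (Fin n)) : ℝ :=
  (volume {t : ℝ | x' + t • u ∈ E}).toReal

/-- Steiner symmetrization of `E` about the hyperplane `u^⊥`: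
`S_u E = {x' + t u : x' ∈ π_u(E), |t| ≤ ℓ_{E,u}(x')/2}`. -/
noncomputable def steiner {n : ℕ} (u : EuclideanSpace ℝ (Fin n))
    (E : Set (EuclideanSpace ℝ (Fin n))) : Set (EuclideanSpace ℝ (Fin n)) :=
  {x | ∃ x' ∈ steinerProj u '' E, ∃ t : ℝ, |t| ≤ steinerLen u E x' / 2 ∧ x = x' + t • u}

/-- The last standard basis vector `e_n` of `ℝⁿ` (junk value `0` if `n = 0`). -/
noncomputable def lastDir (n : ℕ) : EuclideanSpace ℝ (Fin n) :=
  if h : n = 0 then 0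
  else EuclideanSpace.single ⟨n - 1, Nat.sub_lt (Nat.pos_of_ne_zero h) one_pos⟩ 1

/-- `max_{x ∈ E} |x|` for a (nonempty compact) set `E ⊆ ℝⁿ`. -/
noncomputable def maxNorm {n : ℕ} (E : Set (EuclideanSpace ℝ (Fin n))) : ℝ :=
  sSup ((fun x => ‖x‖) '' E)

/-- Reflection `σ_v(x) = x - 2(x·v)v` of `ℝⁿ` across the hyperplane `v^⊥`. -/
noncomputable def reflHyp {n : ℕ} (v : EuclideanSpace ℝ (Fin n))
    (x : EuclideanSpace ℝ (Fin n)) : EuclideanSpace ℝ (Fin n) :=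
  x - (2 * (inner ℝ x v : ℝ)) • v

theorem reflHyp_reflHyp {n : ℕ} {v : EuclideanSpace ℝ (Fin n)} (hv : ‖v‖ = 1)
    (x : EuclideanSpace ℝ (Fin n)) : reflHyp v (reflHyp v x) = x := by
  have hvv : inner ℝ v v = (1 : ℝ) := by rw [real_inner_self_eq_norm_sq, hv, one_pow]
  simp only [reflHyp, inner_sub_left, real_inner_smul_left, hvv]
  module

theorem norm_reflHyp {n : ℕ} {v : EuclideanSpace ℝ (Fin n)} (hv : ‖v‖ = 1)
    (x : EuclideanSpace ℝ (Fin n)) : ‖reflHyp v x‖ = ‖x‖ := by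
  have h : ‖reflHyp v x‖ ^ 2 = ‖x‖ ^ 2 := by
    rw [reflHyp, norm_sub_sq_real, real_inner_smul_right, norm_smul, mul_pow, hv, Real.norm_eq_abs,
      sq_abs]
    ring
  exact (sq_eq_sq₀ (norm_nonneg _) (norm_nonneg _)).mp h

/-- Stability of the covering of the sphere by reflected caps: if `σ_{v_1}(U), …, σ_{v_m}(U)`
cover `rS^{n-1}`, then for unit vectors `u_i` sufficiently close to `v_i` the sets
`σ_{u_1}(U), …, σ_{u_m}(U)` still cover `rS^{n-1}`. -/
theorem stmt12 (n : ℕ) (hn : 2 ≤ n) (r : ℝ) (hr : 0 < r)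
    (U : Set (EuclideanSpace ℝ (Fin n))) (hUne : U.Nonempty)
    (hUopen : ∃ V : Set (EuclideanSpace ℝ (Fin n)),
      IsOpen V ∧ U = V ∩ sphere (0 : EuclideanSpace ℝ (Fin n)) r)
    (m : ℕ) (v : Fin m → EuclideanSpace ℝ (Fin n)) (hv : ∀ i, ‖v i‖ = 1)
    (hcover : sphere (0 : EuclideanSpace ℝ (Fin n)) r ⊆ ⋃ i, reflHyp (v i) '' U) :
    ∃ δ : Fin m → ℝ, (∀ i, 0 < δ i) ∧
      ∀ u : Fin m → EuclideanSpace ℝ (Fin n),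
        (∀ i, ‖u i‖ = 1) → (∀ i, ‖u i - v i‖ < δ i) →
        sphere (0 : EuclideanSpace ℝ (Fin n)) r ⊆ ⋃ i, reflHyp (u i) '' U := by
  obtain ⟨V, hV, rfl⟩ := hUopen
  let W : Set ((Fin m → EuclideanSpace ℝ (Fin n)) × EuclideanSpace ℝ (Fin n)) :=
    ⋃ i, {p | reflHyp (p.1 i) p.2 ∈ V}
  have hW : IsOpen W := isOpen_iUnion fun i => hV.preimage <| by
    unfold reflHyp
    fun_prop
  have hvW : {v} ×ˢ sphere (0 : EuclideanSpace ℝ (Fin n)) r ⊆ W := by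
    rintro ⟨w, x⟩ ⟨hw, hx⟩
    obtain rfl : w = v := hw
    obtain ⟨i, y, hy, rfl : reflHyp (w i) y = x⟩ := Set.mem_iUnion.mp (hcover hx)
    refine Set.mem_iUnion.mpr ⟨i, ?_⟩
    change reflHyp (w i) (reflHyp (w i) y) ∈ V
    rw [reflHyp_reflHyp (hv i)]
    exact hy.1
  obtain ⟨A, B, hA, -, hvA, hB, hAB⟩ :=
    generalized_tube_lemma isCompact_singleton (isCompact_sphere _ r) hW hvW
  obtain ⟨ε, hε, hball⟩ := Metric.isOpen_iff.mp hA v (hvA rfl)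
  refine ⟨fun _ => ε, fun _ => hε, fun u hu huv x hx => ?_⟩
  have huA : u ∈ A := hball <| (dist_pi_lt_iff hε).mpr fun i => by
    simpa only [dist_eq_norm] using huv i
  obtain ⟨i, hi⟩ := Set.mem_iUnion.mp (hAB (Set.mk_mem_prod huA (hB hx)))
  refine Set.mem_iUnion.mpr ⟨i, reflHyp (u i) x, ⟨hi, ?_⟩, reflHyp_reflHyp (hu i) x⟩
  rw [mem_sphere_zero_iff_norm] at hx ⊢
  rw [norm_reflHyp (hu i), hx]
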